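/- For every n ≥ 1 and every degree vector a ∈ ℕ^n, the element k_n(a) ∈ F(n) lies in the kernel of the tree differential: ∂_a(k_n(a)) = 0. -/

import Mathlib

/-!
The differential satisfies a graded Leibniz rule for grafting, up to two extra terms that merge the
left or the right factor into the new root. Apply it to `k_n = Σ_j ± graft(k_j, k_{n−j})` and induct
on `n`: the Leibniz terms vanish, and the extra terms are trees whose root has the three children
`k_i`, `k_{j−i}`, `k_{n−j}`, for cuts `0 < i < j < n`. Each such tree occurs twice, once by
splitting at `j` and merging the left factor, once by splitting at `i` and merging the right one,
and the two signs are opposite.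
-/

/-- Planar rooted trees with leaves decorated by natural numbers (the degrees of
the decorations). -/
inductive DTree : Type
  | leaf (a : ℕ) : DTree
  | node (children : List DTree) : DTree

namespace DTree

mutual
  /-- degree: sum of the leaf decorations plus the number of vertices. -/
  def deg : DTree → ℕ
    | leaf a => a
    | node cs => 1 + degList cs
  def degList : List DTree → ℕ
    | [] => 0
    | c :: rest => deg c + degList rest
end

/-- The weight `W_A` of the vertex at address `p` (list of child indices from the
root): the number of edges of the path `γ` from the root to `A` plus the sum of
the degrees of the subtrees hanging off the path to the left of it. -/
def weightAt : DTree → List ℕ → ℕ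
  | _, [] => 0
  | leaf _, _ :: _ => 0
  | node cs, i :: p => 1 + ((cs.take i).map deg).sum + weightAt (cs.getD i (leaf 0)) p

/-- `∂_A t` : merge the vertex at address `p` into its parent. -/
def contractAt : DTree → List ℕ → DTree
  | t, [] => t
  | leaf a, _ :: _ => leaf a
  | node cs, [i] =>
      match cs.getD i (leaf 0) with
      | node ds => node (cs.take i ++ ds ++ cs.drop (i + 1))
      | leaf _ => node cs
  | node cs, i :: j :: p => node (cs.set i (contractAt (cs.getD i (leaf 0)) (j :: p)))

mutual
  /-- addresses of all vertices of a tree (root included when the tree is a node). -/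
  def vertAddrs : DTree → List (List ℕ)
    | leaf _ => []
    | node cs => [] :: addrsAux cs 0
  def addrsAux : List DTree → ℕ → List (List ℕ)
    | [], _ => []
    | c :: rest, i => (vertAddrs c).map (fun p => i :: p) ++ addrsAux rest (i + 1)
end

/-- addresses of the inner vertices: all vertices except the root. -/
def innerAddrs : DTree → List (List ℕ)
  | leaf _ => []
  | node cs => addrsAux cs 0

end DTree

/-- The linear map `∂` on the free vector space on decorated planar rooted
trees, `∂ t = Σ_{A inner vertex of t} (−1)^{W_A} ∂_A t`. -/
noncomputable def treeDelta : (DTree →₀ ℚ) →ₗ[ℚ] (DTree →₀ ℚ) :=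
  Finsupp.lsum ℚ fun t => LinearMap.toSpanSingleton ℚ (DTree →₀ ℚ)
    (((DTree.innerAddrs t).map fun p =>
        ((-1 : ℚ) ^ DTree.weightAt t p) • Finsupp.single (DTree.contractAt t p) (1 : ℚ)).sum)

/-- grafting, extended bilinearly. -/
noncomputable def graftL : (DTree →₀ ℚ) →ₗ[ℚ] (DTree →₀ ℚ) →ₗ[ℚ] (DTree →₀ ℚ) :=
  Finsupp.lsum ℚ fun t₁ => LinearMap.toSpanSingleton ℚ ((DTree →₀ ℚ) →ₗ[ℚ] (DTree →₀ ℚ))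
    (Finsupp.lsum ℚ fun t₂ => LinearMap.toSpanSingleton ℚ (DTree →₀ ℚ)
      (Finsupp.single (DTree.node [t₁, t₂]) 1))

/-- the element `k_n[a_1,…,a_n]`. -/
noncomputable def kEl : List ℕ → (DTree →₀ ℚ)
  | [] => 0
  | [a] => Finsupp.single (DTree.leaf a) 1
  | a :: b :: rest =>
      ∑ j ∈ (Finset.Ico 1 (a :: b :: rest).length).attach,
        ((-1 : ℚ) ^ (((a :: b :: rest).take j.1).sum + j.1 - 1)) •
          graftL (kEl ((a :: b :: rest).take j.1)) (kEl ((a :: b :: rest).drop j.1))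
termination_by l => l.length
decreasing_by
  · have hj := Finset.mem_Ico.mp j.2
    simp only [List.length_take, List.length_drop, List.length_cons] at hj ⊢
    omega
  · have hj := Finset.mem_Ico.mp j.2
    simp only [List.length_take, List.length_drop, List.length_cons] at hj ⊢
    omega

namespace DTree

/-- The summand `(−1)^{W_A} ∂_A t` of the differential at the vertex `A` with address `p`. -/
noncomputable def signedContract (t : DTree) (p : List ℕ) : DTree →₀ ℚ :=
  (-1 : ℚ) ^ weightAt t p • Finsupp.single (contractAt t p) 1

/-- The tree `node cs` with its `i`-th child merged into the root. The value is `0` when that child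
is a leaf or `i` is out of range. -/
noncomputable def mergeChild (cs : List DTree) (i : ℕ) : DTree →₀ ℚ :=
  match cs.getD i (leaf 0) with
  | leaf _ => 0
  | node ds => Finsupp.single (node (cs.take i ++ ds ++ cs.drop (i + 1))) 1

/-- Replacement of the `i`-th child of `node cs`, linear in the new child. -/
noncomputable def replaceChild (cs : List DTree) (i : ℕ) : (DTree →₀ ℚ) →ₗ[ℚ] (DTree →₀ ℚ) :=
  Finsupp.lmapDomain ℚ ℚ fun c => node (cs.set i c)

/-- The Koszul sign that a degree one operator picks up when it passes the first `i` trees of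
`cs`. -/
def prefixSign (cs : List DTree) (i : ℕ) : ℚ :=
  (-1) ^ ((cs.take i).map deg).sum

theorem treeDelta_single (t : DTree) :
    treeDelta (Finsupp.single t 1) = ((innerAddrs t).map (signedContract t)).sum := by
  simp only [treeDelta, Finsupp.lsum_single, LinearMap.toSpanSingleton_apply, one_smul]
  rfl

theorem treeDelta_single_leaf (a : ℕ) : treeDelta (Finsupp.single (leaf a) 1) = 0 := by
  rw [treeDelta_single, innerAddrs, List.map_nil, List.sum_nil]

theorem ne_nil_of_mem_addrsAux {cs : List DTree} {i : ℕ} {p : List ℕ} (hp : p ∈ addrsAux cs i) :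
    p ≠ [] := by
  induction cs generalizing i with
  | nil => simp [addrsAux] at hp
  | cons c cs ih =>
    simp only [addrsAux, List.mem_append, List.mem_map] at hp
    rcases hp with ⟨q, -, rfl⟩ | hp
    · exact List.cons_ne_nil i q
    · exact ih hp

theorem sum_map_addrsAux {M : Type*} [AddCommMonoid M] (f : List ℕ → M) (cs : List DTree) (k : ℕ) :
    ((addrsAux cs k).map f).sum =
      ∑ i ∈ Finset.range cs.length,
        ((vertAddrs (cs.getD i (leaf 0))).map fun p => f ((k + i) :: p)).sum := by
  induction cs generalizing k with
  | nil => simp [addrsAux]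
  | cons c cs ih =>
    simp only [addrsAux, List.map_append, List.sum_append, List.map_map, ih, List.length_cons,
      Finset.sum_range_succ', List.getD_cons_succ, List.getD_cons_zero, add_zero, add_assoc,
      add_comm 1, Function.comp_def]
    exact add_comm _ _

theorem signedContract_singleton {cs ds : List DTree} {i : ℕ} (h : cs.getD i (leaf 0) = node ds) :
    signedContract (node cs) [i] = -prefixSign cs i • mergeChild cs i := by
  simp only [signedContract, weightAt, contractAt, mergeChild, prefixSign, h, pow_add, pow_one,
    pow_zero, mul_one, neg_one_mul]

theorem signedContract_cons (cs : List DTree) (i : ℕ) {p : List ℕ} (hp : p ≠ []) :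
    signedContract (node cs) (i :: p) =
      -prefixSign cs i • replaceChild cs i (signedContract (cs.getD i (leaf 0)) p) := by
  obtain ⟨j, q, rfl⟩ := List.exists_cons_of_ne_nil hp
  simp only [signedContract, replaceChild, prefixSign, weightAt.eq_def (node cs), contractAt,
    map_smul, Finsupp.lmapDomain_apply, Finsupp.mapDomain_single, smul_smul]
  congr 1
  ring

theorem sum_signedContract_child (cs : List DTree) (i : ℕ) :
    ((vertAddrs (cs.getD i (leaf 0))).map fun p => signedContract (node cs) (i :: p)).sum =
      -prefixSign cs i • (mergeChild cs i +
        replaceChild cs i (treeDelta (Finsupp.single (cs.getD i (leaf 0)) 1))) := by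
  cases h : cs.getD i (leaf 0) with
  | leaf a => simp [vertAddrs, mergeChild, -List.getD_eq_getElem?_getD, h, treeDelta_single_leaf]
  | node ds =>
    have below : ∀ p ∈ addrsAux ds 0, signedContract (node cs) (i :: p) =
        -prefixSign cs i • replaceChild cs i (signedContract (node ds) p) := fun p hp => by
      rw [signedContract_cons cs i (ne_nil_of_mem_addrsAux hp), h]
    rw [vertAddrs, List.map_cons, List.sum_cons, signedContract_singleton h,
      List.map_congr_left below, smul_add, treeDelta_single, innerAddrs, map_list_sum,
      List.smul_sum, List.map_map, List.map_map]
    rfl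

theorem treeDelta_single_node (cs : List DTree) :
    treeDelta (Finsupp.single (node cs) 1) =
      -∑ i ∈ Finset.range cs.length, prefixSign cs i • (mergeChild cs i +
        replaceChild cs i (treeDelta (Finsupp.single (cs.getD i (leaf 0)) 1))) := by
  simp only [treeDelta_single (node cs), innerAddrs, sum_map_addrsAux, zero_add,
    sum_signedContract_child, neg_smul, Finset.sum_neg_distrib]

end DTree

section Graft

open DTree

/-- Grafting followed by merging the left factor into the root, extended bilinearly. -/
noncomputable def mergeLeft : (DTree →₀ ℚ) →ₗ[ℚ] (DTree →₀ ℚ) →ₗ[ℚ] (DTree →₀ ℚ) :=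
  Finsupp.linearCombination ℚ fun s => Finsupp.linearCombination ℚ fun t => mergeChild [s, t] 0

/-- Grafting followed by merging the right factor into the root, extended bilinearly. -/
noncomputable def mergeRight : (DTree →₀ ℚ) →ₗ[ℚ] (DTree →₀ ℚ) →ₗ[ℚ] (DTree →₀ ℚ) :=
  Finsupp.linearCombination ℚ fun s => Finsupp.linearCombination ℚ fun t => mergeChild [s, t] 1

/-- The grading involution `t ↦ (−1)^{|t|} t`. -/
noncomputable def gradingInvolution : (DTree →₀ ℚ) →ₗ[ℚ] (DTree →₀ ℚ) :=
  Finsupp.linearCombination ℚ fun t => (-1 : ℚ) ^ t.deg • Finsupp.single t 1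

theorem graftL_single (s t : DTree) :
    graftL (Finsupp.single s 1) (Finsupp.single t 1) = Finsupp.single (node [s, t]) 1 := by
  simp [graftL]

theorem mergeLeft_single (s t : DTree) :
    mergeLeft (Finsupp.single s 1) (Finsupp.single t 1) = mergeChild [s, t] 0 := by
  simp [mergeLeft]

theorem mergeRight_single (s t : DTree) :
    mergeRight (Finsupp.single s 1) (Finsupp.single t 1) = mergeChild [s, t] 1 := by
  simp [mergeRight]

theorem gradingInvolution_single (t : DTree) :
    gradingInvolution (Finsupp.single t 1) = (-1 : ℚ) ^ t.deg • Finsupp.single t 1 := by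
  simp [gradingInvolution]

theorem replaceChild_pair_zero (s t : DTree) (x : DTree →₀ ℚ) :
    replaceChild [s, t] 0 x = graftL x (Finsupp.single t 1) := by
  have h : replaceChild [s, t] 0 = graftL.flip (Finsupp.single t 1) := by
    ext u : 2
    simp [replaceChild, graftL_single]
  exact LinearMap.congr_fun h x

theorem replaceChild_pair_one (s t : DTree) (y : DTree →₀ ℚ) :
    replaceChild [s, t] 1 y = graftL (Finsupp.single s 1) y := by
  have h : replaceChild [s, t] 1 = graftL (Finsupp.single s 1) := by
    ext u : 2
    simp [replaceChild, graftL_single]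
  exact LinearMap.congr_fun h y

theorem treeDelta_graftL (x y : DTree →₀ ℚ) :
    treeDelta (graftL x y) = -(mergeLeft x y + graftL (treeDelta x) y +
      (mergeRight (gradingInvolution x) y + graftL (gradingInvolution x) (treeDelta y))) := by
  have h : graftL.compr₂ treeDelta = -(mergeLeft + graftL ∘ₗ treeDelta +
      (mergeRight ∘ₗ gradingInvolution + graftL.compl₁₂ gradingInvolution treeDelta)) := by
    ext s t : 4
    simp [graftL_single, treeDelta_single_node, Finset.sum_range_succ, prefixSign,
      mergeLeft_single, mergeRight_single, gradingInvolution_single, replaceChild_pair_zero,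
      replaceChild_pair_one, -Finsupp.smul_single]
  exact LinearMap.congr_fun₂ h x y

theorem gradingInvolution_graftL (x y : DTree →₀ ℚ) :
    gradingInvolution (graftL x y) = -graftL (gradingInvolution x) (gradingInvolution y) := by
  have h : graftL.compr₂ gradingInvolution =
      -graftL.compl₁₂ gradingInvolution gradingInvolution := by
    ext s t : 4
    simp [graftL_single, gradingInvolution_single, deg, degList, pow_add, smul_smul, mul_comm,
      -Finsupp.smul_single]
  exact LinearMap.congr_fun₂ h x y

-- Both sides are the tree whose root has the three children `x`, `y`, `z`.
theorem mergeLeft_graftL (x y z : DTree →₀ ℚ) :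
    mergeLeft (graftL x y) z = mergeRight x (graftL y z) := by
  have h : graftL.compr₂ mergeLeft =
      (LinearMap.llcomp ℚ _ _ _).compl₁₂ mergeRight graftL := by
    ext s t u : 6
    simp [graftL_single, mergeLeft_single, mergeRight_single, mergeChild]
  exact LinearMap.congr_fun (LinearMap.congr_fun₂ h x y) z

theorem mergeLeft_single_leaf (a : ℕ) (y : DTree →₀ ℚ) :
    mergeLeft (Finsupp.single (leaf a) 1) y = 0 := by
  have h : mergeLeft (Finsupp.single (leaf a) 1) = 0 := by
    ext t : 2
    simp [mergeLeft_single, mergeChild]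
  exact LinearMap.congr_fun h y

theorem mergeRight_single_leaf (x : DTree →₀ ℚ) (a : ℕ) :
    mergeRight x (Finsupp.single (leaf a) 1) = 0 := by
  have h : mergeRight.flip (Finsupp.single (leaf a) 1) = 0 := by
    ext s : 2
    simp [mergeRight_single, mergeChild]
  exact LinearMap.congr_fun h x

end Graft

@[elab_as_elim]
theorem list_take_drop_induction {α : Type*} {P : List α → Prop}
    (singleton : ∀ a, P [a])
    (split : ∀ l : List α, l.length ≠ 1 →
      (∀ j ∈ Finset.Ico 1 l.length, P (l.take j) ∧ P (l.drop j)) → P l)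
    (l : List α) : P l := by
  induction hn : l.length using Nat.strong_induction_on generalizing l with
  | _ n ih =>
    by_cases h1 : l.length = 1
    · obtain ⟨a, rfl⟩ := List.length_eq_one_iff.mp h1
      exact singleton a
    · refine split l h1 fun j hj => ?_
      have hj := Finset.mem_Ico.mp hj
      exact ⟨ih _ (by rw [List.length_take]; omega) _ rfl,
        ih _ (by rw [List.length_drop]; omega) _ rfl⟩

/-- The sign `(−1)^{|k_n(a)|}`, where `|k_n(a)| = a_1 + ⋯ + a_n + (n − 1)` because a binary tree
with `n` leaves has `n - 1` vertices. The exponent has `n + 1` in place of `n - 1`, which has the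
same parity and avoids truncated subtraction. -/
def kElSign (l : List ℕ) : ℚ :=
  (-1) ^ (l.sum + l.length + 1)

theorem kElSign_append (l m : List ℕ) : kElSign (l ++ m) = -(kElSign l * kElSign m) := by
  simp only [kElSign, List.sum_append, List.length_append]
  ring

theorem kElSign_mul_self (l : List ℕ) : kElSign l * kElSign l = 1 := by
  rw [kElSign, ← mul_pow, neg_one_mul, neg_neg, one_pow]

theorem kEl_singleton (a : ℕ) : kEl [a] = Finsupp.single (DTree.leaf a) 1 := by
  rw [kEl]

theorem kEl_eq_sum {l : List ℕ} (hl : l.length ≠ 1) :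
    kEl l = ∑ j ∈ Finset.Ico 1 l.length,
      kElSign (l.take j) • graftL (kEl (l.take j)) (kEl (l.drop j)) := by
  match l, hl with
  | [], _ => simp [kEl]
  | a :: b :: r, _ =>
    rw [kEl, ← Finset.sum_attach (Finset.Ico 1 _)]
    refine Finset.sum_congr rfl fun ⟨j, hj⟩ _ => ?_
    obtain ⟨h1, hlt⟩ := Finset.mem_Ico.mp hj
    have parity : ((a :: b :: r).take j).sum + j + 1 =
        ((a :: b :: r).take j).sum + j - 1 + 2 := by omega
    rw [kElSign, List.length_take_of_le hlt.le, parity, pow_add, neg_one_sq, mul_one]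

theorem gradingInvolution_kEl (l : List ℕ) : gradingInvolution (kEl l) = kElSign l • kEl l := by
  induction l using list_take_drop_induction with
  | singleton a =>
    simp [kEl_singleton, gradingInvolution_single, DTree.deg, kElSign, pow_add]
  | split l hl ih =>
    rw [kEl_eq_sum hl, map_sum, Finset.smul_sum]
    refine Finset.sum_congr rfl fun j hj => ?_
    have sign_eq : kElSign l = -(kElSign (l.take j) * kElSign (l.drop j)) := by
      rw [← kElSign_append, List.take_append_drop]
    rw [map_smul, gradingInvolution_graftL, (ih j hj).1, (ih j hj).2, sign_eq]
    simp only [map_smul, LinearMap.smul_apply]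
    module

theorem mergeLeft_kEl (l : List ℕ) (z : DTree →₀ ℚ) :
    mergeLeft (kEl l) z = ∑ i ∈ Finset.Ico 1 l.length,
      kElSign (l.take i) • mergeRight (kEl (l.take i)) (graftL (kEl (l.drop i)) z) := by
  by_cases hl : l.length = 1
  · obtain ⟨a, rfl⟩ := List.length_eq_one_iff.mp hl
    simp [kEl_singleton, mergeLeft_single_leaf]
  · simp only [kEl_eq_sum hl, map_sum, map_smul, LinearMap.sum_apply, LinearMap.smul_apply,
      mergeLeft_graftL]

theorem mergeRight_kEl (x : DTree →₀ ℚ) (l : List ℕ) :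
    mergeRight x (kEl l) = ∑ i ∈ Finset.Ico 1 l.length,
      kElSign (l.take i) • mergeRight x (graftL (kEl (l.take i)) (kEl (l.drop i))) := by
  by_cases hl : l.length = 1
  · obtain ⟨a, rfl⟩ := List.length_eq_one_iff.mp hl
    simp [kEl_singleton, mergeRight_single_leaf]
  · simp only [kEl_eq_sum hl, map_sum, map_smul]

/-- The contribution of cutting `l` at `i ≤ j` into three consecutive blocks: the trees whose root
has the three corresponding elements `kEl` as children, with the sign of the middle block. -/
noncomputable def ternaryTerm (l : List ℕ) (i j : ℕ) : DTree →₀ ℚ :=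
  kElSign ((l.drop i).take (j - i)) •
    mergeRight (kEl (l.take i)) (graftL (kEl ((l.drop i).take (j - i))) (kEl (l.drop j)))

theorem smul_mergeLeft_kEl_take {l : List ℕ} {j : ℕ} (hj : j ≤ l.length) :
    kElSign (l.take j) • mergeLeft (kEl (l.take j)) (kEl (l.drop j)) =
      -∑ i ∈ Finset.Ico 1 j, ternaryTerm l i j := by
  rw [mergeLeft_kEl, List.length_take_of_le hj, Finset.smul_sum, ← Finset.sum_neg_distrib]
  refine Finset.sum_congr rfl fun i hi => ?_
  have hij : i ≤ j := (Finset.mem_Ico.mp hi).2.le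
  have sign_eq : kElSign (l.take j) * kElSign (l.take i) =
      -kElSign ((l.drop i).take (j - i)) := by
    have blocks : l.take j = l.take i ++ (l.drop i).take (j - i) := by
      rw [← List.take_add, Nat.add_sub_cancel' hij]
    rw [blocks, kElSign_append, neg_mul, mul_right_comm, kElSign_mul_self, one_mul]
  rw [smul_smul, List.take_take, min_eq_left hij, List.drop_take, sign_eq, neg_smul, ternaryTerm]

theorem mergeRight_kEl_take_drop {l : List ℕ} {j : ℕ} (hj : j ≤ l.length) :
    mergeRight (kEl (l.take j)) (kEl (l.drop j)) =
      ∑ i ∈ Finset.Ico (j + 1) l.length, ternaryTerm l j i := by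
  have shift := Finset.sum_Ico_add (ternaryTerm l j) 1 (l.length - j) j
  rw [Nat.sub_add_cancel hj, add_comm 1] at shift
  rw [mergeRight_kEl, List.length_drop, ← shift]
  simp only [ternaryTerm, List.drop_drop, Nat.add_sub_cancel_left]

theorem treeDelta_graftL_kEl {l : List ℕ} {j : ℕ} (hj : j ≤ l.length)
    (hleft : treeDelta (kEl (l.take j)) = 0) (hright : treeDelta (kEl (l.drop j)) = 0) :
    treeDelta (kElSign (l.take j) • graftL (kEl (l.take j)) (kEl (l.drop j))) =
      ∑ i ∈ Finset.Ico 1 j, ternaryTerm l i j -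
        ∑ i ∈ Finset.Ico (j + 1) l.length, ternaryTerm l j i := by
  rw [map_smul, treeDelta_graftL, hleft, hright, gradingInvolution_kEl, map_zero, map_zero,
    LinearMap.zero_apply, add_zero, add_zero, map_smul, LinearMap.smul_apply, smul_neg, smul_add,
    smul_mergeLeft_kEl_take hj, smul_smul, kElSign_mul_self, one_smul,
    mergeRight_kEl_take_drop hj]
  abel

/-- Appendix A: for every `n ≥ 1` and every degree vector
`a ∈ ℕ^n`, the element `k_n[a]` lies in the kernel of the tree differential:
`∂ k_n[a] = 0`. -/
theorem stmt_15 (l : List ℕ) (hl : l ≠ []) : treeDelta (kEl l) = 0 := by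
  clear hl
  induction l using list_take_drop_induction with
  | singleton a => rw [kEl_singleton, DTree.treeDelta_single_leaf]
  | split l hl ih =>
    have boundary_cut : ∀ j ∈ Finset.Ico 1 l.length,
        treeDelta (kElSign (l.take j) • graftL (kEl (l.take j)) (kEl (l.drop j))) =
          ∑ i ∈ Finset.Ico 1 j, ternaryTerm l i j -
            ∑ i ∈ Finset.Ico (j + 1) l.length, ternaryTerm l j i := fun j hj =>
      treeDelta_graftL_kEl (Finset.mem_Ico.mp hj).2.le (ih j hj).1 (ih j hj).2
    rw [kEl_eq_sum hl, map_sum, Finset.sum_congr rfl boundary_cut, Finset.sum_sub_distrib,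
      Finset.sum_Ico_Ico_comm', sub_self]
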